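/- With f₃(z) = Σ_{n=1}^∞ z^n/n^{n+1} and G(p) = s₂'(1+p) − s₁'(1+p) as above, for all real x > 1/e: ∫_0^∞ e^{-xz} f₃(z) dz = x^{-2} ∫_0^∞ G(ln(1+t)) / ((t e + e − x^{-1})(t+1)) dt. -/

import Mathlib

open MeasureTheory Set

/-! Both sides equal `∑ n! / (n ^ (n + 1) x ^ (n + 1))`, `n ≥ 1`. On the left this is the Laplace
transform taken term by term. On the right, `n! / n ^ (n + 1) = ∫ (s e⁻ˢ) ^ n ds` turns the sum into
a geometric series under the integral sign, with ratio at most `1 / (e x) < 1`. The substitution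
`q = s - log s`, for which `e^{-q} = s e⁻ˢ`, is then performed separately on `(0, 1)` and `(1, ∞)`,
where it is inverted by `s₁` and `s₂`; it produces the density `|s₂'| + |s₁'| = s₂' - s₁'`, and
`q = 1 + log (1 + t)` gives the stated form. -/

open Real
open scoped Nat

section GammaIntegral

theorem integral_pow_mul_exp_neg_mul_Ioi (k : ℕ) {r : ℝ} (hr : 0 < r) :
    ∫ t in Ioi (0 : ℝ), t ^ k * exp (-(r * t)) = k ! / r ^ (k + 1) := by
  have h := integral_rpow_mul_exp_neg_mul_Ioi (a := k + 1) (by positivity) hr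
  simp only [add_sub_cancel_right, rpow_natCast, Gamma_nat_eq_factorial] at h
  rw [h, ← Nat.cast_add_one, rpow_natCast, one_div, inv_pow, div_eq_inv_mul]

theorem integrableOn_pow_mul_exp_neg_mul_Ioi (k : ℕ) {r : ℝ} (hr : 0 < r) :
    IntegrableOn (fun t : ℝ => t ^ k * exp (-(r * t))) (Ioi 0) := by
  refine Integrable.of_integral_ne_zero ?_
  rw [integral_pow_mul_exp_neg_mul_Ioi k hr]
  positivity

theorem integral_mul_exp_neg_pow_Ioi {n : ℕ} (hn : n ≠ 0) :
    ∫ s in Ioi (0 : ℝ), (s * exp (-s)) ^ n = n ! / (n : ℝ) ^ (n + 1) := by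
  have hpow (s : ℝ) : (s * exp (-s)) ^ n = s ^ n * exp (-(n * s)) := by
    rw [mul_pow, ← exp_nat_mul, mul_neg]
  simp_rw [hpow]
  exact integral_pow_mul_exp_neg_mul_Ioi n (by positivity)

theorem integrableOn_mul_exp_neg_Ioi : IntegrableOn (fun s : ℝ => s * exp (-s)) (Ioi 0) := by
  simpa using integrableOn_pow_mul_exp_neg_mul_Ioi 1 one_pos

end GammaIntegral

section TermwiseIntegration

variable {E : Type*} [NormedAddCommGroup E] [NormedSpace ℝ E]

theorem hasSum_laplace_tsum_pow_smul [CompleteSpace E] {ι : Type*} [Countable ι] (k : ι → ℕ)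
    (a : ι → E) {x : ℝ} (hx : 0 < x) (ha : Summable fun i => ((k i)! / x ^ (k i + 1)) * ‖a i‖) :
    HasSum (fun i => ((k i)! / x ^ (k i + 1) : ℝ) • a i)
      (∫ z in Ioi (0 : ℝ), exp (-x * z) • ∑' i, z ^ k i • a i) := by
  set F : ι → ℝ → E := fun i z => (z ^ k i * exp (-(x * z))) • a i
  have hF_int (i : ι) : IntegrableOn (F i) (Ioi 0) :=
    (integrableOn_pow_mul_exp_neg_mul_Ioi (k i) hx).smul_const (a i)
  have hF_norm (i : ι) : ∫ z in Ioi (0 : ℝ), ‖F i z‖ = (k i)! / x ^ (k i + 1) * ‖a i‖ := by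
    rw [← integral_pow_mul_exp_neg_mul_Ioi (k i) hx, ← integral_mul_const]
    refine setIntegral_congr_fun measurableSet_Ioi fun z (hz : 0 < z) => ?_
    rw [norm_smul, norm_of_nonneg (by positivity)]
  have hF_tsum (z : ℝ) : exp (-x * z) • ∑' i, z ^ k i • a i = ∑' i, F i z := by
    simp only [F, ← tsum_const_smul'', smul_smul, neg_mul, mul_comm (exp _)]
  simp_rw [hF_tsum, ← integral_pow_mul_exp_neg_mul_Ioi _ hx, ← integral_smul_const]
  exact hasSum_integral_of_summable_integral_norm hF_int
    (ha.congr fun i => (hF_norm i).symm)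

variable {α 𝕜 : Type*} [MeasurableSpace α] {μ : Measure α} [RCLike 𝕜] {w u : α → 𝕜} {r : ℝ}

theorem integrable_mul_inv_one_sub (hw : Integrable w μ)
    (hu : AEStronglyMeasurable u μ) (hur : ∀ᵐ a ∂μ, ‖u a‖ ≤ r) (hr : r < 1) :
    Integrable (fun a => w a * (1 - u a)⁻¹) μ := by
  refine hw.mul_bdd (c := (1 - r)⁻¹) (hu.aemeasurable.const_sub 1).inv.aestronglyMeasurable ?_
  filter_upwards [hur] with a ha
  rw [norm_inv]
  refine inv_anti₀ (sub_pos.2 hr) ?_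
  calc 1 - r ≤ ‖(1 : 𝕜)‖ - ‖u a‖ := by rw [norm_one]; gcongr
    _ ≤ ‖1 - u a‖ := norm_sub_norm_le 1 (u a)

theorem hasSum_integral_mul_pow (hw : Integrable w μ)
    (hu : AEStronglyMeasurable u μ) (hur : ∀ᵐ a ∂μ, ‖u a‖ ≤ r) (hr : r < 1) :
    HasSum (fun n : ℕ => ∫ a, w a * u a ^ n ∂μ) (∫ a, w a * (1 - u a)⁻¹ ∂μ) := by
  refine hasSum_integral_of_dominated_convergence (fun n a => ‖w a‖ * r ^ n)
    (fun n => hw.aestronglyMeasurable.mul (hu.pow n)) (fun n => ?_) ?_ ?_ ?_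
  · filter_upwards [hur] with a ha
    rw [norm_mul, norm_pow]
    gcongr
  · filter_upwards [hur] with a ha
    exact (summable_geometric_of_lt_one ((norm_nonneg _).trans ha) hr).mul_left _
  · simpa only [tsum_mul_left] using hw.norm.mul_const (∑' n : ℕ, r ^ n)
  · filter_upwards [hur] with a ha
    exact (hasSum_geometric_of_norm_lt_one (ha.trans_lt hr)).mul_left _

end TermwiseIntegration

section InverseSubstitution

variable {E : Type*} [NormedAddCommGroup E] [NormedSpace ℝ E] {f g : ℝ → ℝ} {U : Set ℝ}

theorem deriv_eq_inv_of_leftInvOn (hU : IsOpen U) {f' s : ℝ} (hs : s ∈ U)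
    (hf : HasStrictDerivAt f f' s) (hf' : f' ≠ 0) (hgf : LeftInvOn g f U) :
    deriv g (f s) = f'⁻¹ :=
  (hf.to_local_left_inverse hf' (Filter.mem_of_superset (hU.mem_nhds hs) hgf)).hasDerivAt.deriv

variable {f' : ℝ → ℝ}

theorem abs_smul_abs_deriv_smul_of_leftInvOn (hU : IsOpen U)
    (hf : ∀ s ∈ U, HasStrictDerivAt f (f' s) s) (hf' : ∀ s ∈ U, f' s ≠ 0) (hgf : LeftInvOn g f U)
    (F : ℝ → E) {s : ℝ} (hs : s ∈ U) :
    |f' s| • |deriv g (f s)| • F (f s) = F (f s) := by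
  rw [deriv_eq_inv_of_leftInvOn hU hs (hf s hs) (hf' s hs) hgf, abs_inv,
    smul_inv_smul₀ (abs_ne_zero.2 (hf' s hs))]

theorem integrableOn_image_abs_deriv_smul_iff_of_leftInvOn (hU : IsOpen U)
    (hf : ∀ s ∈ U, HasStrictDerivAt f (f' s) s) (hf' : ∀ s ∈ U, f' s ≠ 0) (hgf : LeftInvOn g f U)
    (F : ℝ → E) :
    IntegrableOn (fun q => |deriv g q| • F q) (f '' U) ↔ IntegrableOn (fun s => F (f s)) U := by
  rw [integrableOn_image_iff_integrableOn_abs_deriv_smul hU.measurableSet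
    (fun s hs => (hf s hs).hasDerivAt.hasDerivWithinAt) hgf.injOn]
  exact integrableOn_congr_fun
    (fun s hs => abs_smul_abs_deriv_smul_of_leftInvOn hU hf hf' hgf F hs) hU.measurableSet

theorem integral_image_abs_deriv_smul_of_leftInvOn (hU : IsOpen U)
    (hf : ∀ s ∈ U, HasStrictDerivAt f (f' s) s) (hf' : ∀ s ∈ U, f' s ≠ 0) (hgf : LeftInvOn g f U)
    (F : ℝ → E) :
    ∫ q in f '' U, |deriv g q| • F q = ∫ s in U, F (f s) := by
  rw [integral_image_eq_integral_abs_deriv_smul hU.measurableSet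
    (fun s hs => (hf s hs).hasDerivAt.hasDerivWithinAt) hgf.injOn]
  exact setIntegral_congr_fun hU.measurableSet
    fun s hs => abs_smul_abs_deriv_smul_of_leftInvOn hU hf hf' hgf F hs

theorem integral_Ioi_eq_integral_comp_add_log (a : ℝ) (H : ℝ → E) :
    ∫ q in Ioi a, H q = ∫ t in Ioi (0 : ℝ), (1 + t)⁻¹ • H (a + log (1 + t)) := by
  have himage : (fun t => a + log (1 + t)) '' Ioi 0 = Ioi a := by
    refine Subset.antisymm ?_ fun q (hq : a < q) => ⟨exp (q - a) - 1, ?_, by simp⟩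
    · rintro _ ⟨t, ht : 0 < t, rfl⟩
      exact lt_add_of_pos_right a (log_pos (by linarith))
    · exact sub_pos.2 (one_lt_exp_iff.2 (sub_pos.2 hq))
  have hderiv (t : ℝ) (ht : t ∈ Ioi (0 : ℝ)) :
      HasDerivWithinAt (fun t => a + log (1 + t)) (1 + t)⁻¹ (Ioi 0) t := by
    have hlog := ((hasDerivAt_id t).const_add 1).log (add_pos one_pos ht).ne'
    simpa using (hlog.const_add a).hasDerivWithinAt
  have hmono : MonotoneOn (fun t => a + log (1 + t)) (Ioi 0) := fun t (ht : 0 < t) t' _ htt' => by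
    dsimp only
    gcongr
  rw [← himage, integral_image_eq_integral_deriv_smul_of_monotoneOn measurableSet_Ioi hderiv hmono]

end InverseSubstitution

section StirlingPhase

/-- The phase `φ(s) = s - log s` of the integral `n! = n ^ (n + 1) ∫ e^{-n φ(s)} ds`
over `(0, ∞)`. -/
noncomputable def stirlingPhase (s : ℝ) : ℝ := s - log s

theorem one_lt_stirlingPhase {s : ℝ} (hs₀ : 0 < s) (hs₁ : s ≠ 1) : 1 < stirlingPhase s :=
  lt_sub_comm.1 (log_lt_sub_one_of_pos hs₀ hs₁)

theorem exp_neg_stirlingPhase {s : ℝ} (hs : 0 < s) : exp (-stirlingPhase s) = s * exp (-s) := by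
  rw [stirlingPhase, neg_sub, sub_eq_add_neg, exp_add, exp_log hs]

theorem hasStrictDerivAt_stirlingPhase {s : ℝ} (hs : s ≠ 0) :
    HasStrictDerivAt stirlingPhase (1 - s⁻¹) s :=
  (hasStrictDerivAt_id s).sub (hasStrictDerivAt_log hs)

theorem continuousOn_stirlingPhase : ContinuousOn stirlingPhase (Ioi 0) := fun _ hs =>
  (hasStrictDerivAt_stirlingPhase (ne_of_gt hs)).hasDerivAt.continuousAt.continuousWithinAt

theorem strictMonoOn_stirlingPhase : StrictMonoOn stirlingPhase (Ici 1) := by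
  refine strictMonoOn_of_deriv_pos (convex_Ici 1)
    (continuousOn_stirlingPhase.mono (Ici_subset_Ioi.2 one_pos)) fun s hs => ?_
  rw [interior_Ici] at hs
  rw [(hasStrictDerivAt_stirlingPhase (one_pos.trans hs).ne').hasDerivAt.deriv]
  exact sub_pos.2 (inv_lt_one_of_one_lt₀ hs)

theorem strictAntiOn_stirlingPhase : StrictAntiOn stirlingPhase (Ioc 0 1) := by
  refine strictAntiOn_of_deriv_neg (convex_Ioc 0 1)
    (continuousOn_stirlingPhase.mono Ioc_subset_Ioi_self) fun s hs => ?_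
  rw [interior_Ioc] at hs
  rw [(hasStrictDerivAt_stirlingPhase hs.1.ne').hasDerivAt.deriv]
  exact sub_neg.2 ((one_lt_inv₀ hs.1).2 hs.2)

end StirlingPhase

/-- `g` is the branch on `(1, ∞)` of the inverse of `stirlingPhase` with values in `U`, an open set
of positive reals avoiding the critical point `1` on which the phase is injective. The two branches
of interest have `U = (0, 1)` and `U = (1, ∞)`; nothing is required of `g` outside `(1, ∞)`. -/
structure IsStirlingBranch (U : Set ℝ) (g : ℝ → ℝ) : Prop where
  isOpen : IsOpen U
  subset : U ⊆ Ioi 0 \ {1}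
  injOn : InjOn stirlingPhase U
  mapsTo : MapsTo g (Ioi 1) U
  rightInvOn : RightInvOn g stirlingPhase (Ioi 1)

namespace IsStirlingBranch

variable {E : Type*} [NormedAddCommGroup E] [NormedSpace ℝ E] {U : Set ℝ} {g : ℝ → ℝ} {q : ℝ}

theorem of_Ioo (hg : ∀ q, 1 < q → g q ∈ Ioo (0 : ℝ) 1 ∧ g q - log (g q) = q) :
    IsStirlingBranch (Ioo 0 1) g where
  isOpen := isOpen_Ioo
  subset _ hs := ⟨hs.1, hs.2.ne⟩
  injOn := (strictAntiOn_stirlingPhase.mono Ioo_subset_Ioc_self).injOn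
  mapsTo q hq := (hg q hq).1
  rightInvOn q hq := (hg q hq).2

theorem of_Ioi (hg : ∀ q, 1 < q → g q ∈ Ioi (1 : ℝ) ∧ g q - log (g q) = q) :
    IsStirlingBranch (Ioi 1) g where
  isOpen := isOpen_Ioi
  subset _ hs := ⟨mem_Ioi.2 (one_pos.trans hs), ne_of_gt hs⟩
  injOn := (strictMonoOn_stirlingPhase.mono Ioi_subset_Ici_self).injOn
  mapsTo q hq := (hg q hq).1
  rightInvOn q hq := (hg q hq).2

theorem mapsTo_stirlingPhase (hg : IsStirlingBranch U g) : MapsTo stirlingPhase U (Ioi 1) :=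
  fun _ hs => one_lt_stirlingPhase (hg.subset hs).1 (hg.subset hs).2

theorem leftInvOn (hg : IsStirlingBranch U g) : LeftInvOn g stirlingPhase U :=
  hg.injOn.rightInvOn_of_leftInvOn hg.rightInvOn hg.mapsTo_stirlingPhase hg.mapsTo

theorem image_stirlingPhase (hg : IsStirlingBranch U g) : stirlingPhase '' U = Ioi 1 :=
  (hg.rightInvOn.surjOn hg.mapsTo).image_eq_of_mapsTo hg.mapsTo_stirlingPhase

theorem hasStrictDerivAt_stirlingPhase (hg : IsStirlingBranch U g) {s : ℝ} (hs : s ∈ U) :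
    HasStrictDerivAt stirlingPhase (1 - s⁻¹) s :=
  _root_.hasStrictDerivAt_stirlingPhase (ne_of_gt (hg.subset hs).1)

theorem one_sub_inv_ne_zero (hg : IsStirlingBranch U g) {s : ℝ} (hs : s ∈ U) : 1 - s⁻¹ ≠ 0 :=
  sub_ne_zero.2 (inv_ne_one.2 (hg.subset hs).2).symm

theorem deriv_eq (hg : IsStirlingBranch U g) (hq : 1 < q) : deriv g q = (1 - (g q)⁻¹)⁻¹ := by
  have hgq := hg.mapsTo hq
  simpa only [hg.rightInvOn hq] using deriv_eq_inv_of_leftInvOn hg.isOpen hgq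
    (hg.hasStrictDerivAt_stirlingPhase hgq) (hg.one_sub_inv_ne_zero hgq) hg.leftInvOn

theorem deriv_neg (hg : IsStirlingBranch (Ioo 0 1) g) (hq : 1 < q) : deriv g q < 0 := by
  rw [hg.deriv_eq hq, inv_lt_zero, sub_neg]
  exact (one_lt_inv₀ (hg.mapsTo hq).1).2 (hg.mapsTo hq).2

theorem deriv_pos (hg : IsStirlingBranch (Ioi 1) g) (hq : 1 < q) : 0 < deriv g q := by
  rw [hg.deriv_eq hq, inv_pos, sub_pos]
  exact inv_lt_one_of_one_lt₀ (hg.mapsTo hq)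

theorem integrableOn_abs_deriv_smul_iff (hg : IsStirlingBranch U g) (F : ℝ → E) :
    IntegrableOn (fun q => |deriv g q| • F (exp (-q))) (Ioi 1) ↔
      IntegrableOn (fun s => F (s * exp (-s))) U := by
  rw [← hg.image_stirlingPhase, integrableOn_image_abs_deriv_smul_iff_of_leftInvOn hg.isOpen
    (fun _ => hg.hasStrictDerivAt_stirlingPhase) (fun _ => hg.one_sub_inv_ne_zero) hg.leftInvOn
    (fun q => F (exp (-q)))]
  exact integrableOn_congr_fun
    (fun s hs => by rw [exp_neg_stirlingPhase (hg.subset hs).1]) hg.isOpen.measurableSet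

theorem integral_abs_deriv_smul (hg : IsStirlingBranch U g) (F : ℝ → E) :
    ∫ q in Ioi 1, |deriv g q| • F (exp (-q)) = ∫ s in U, F (s * exp (-s)) := by
  rw [← hg.image_stirlingPhase, integral_image_abs_deriv_smul_of_leftInvOn hg.isOpen
    (fun _ => hg.hasStrictDerivAt_stirlingPhase) (fun _ => hg.one_sub_inv_ne_zero) hg.leftInvOn
    (fun q => F (exp (-q)))]
  exact setIntegral_congr_fun hg.isOpen.measurableSet
    fun s hs => by rw [exp_neg_stirlingPhase (hg.subset hs).1]

theorem integral_deriv_sub_deriv_smul {s₁ s₂ : ℝ → ℝ} (h₁ : IsStirlingBranch (Ioo 0 1) s₁)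
    (h₂ : IsStirlingBranch (Ioi 1) s₂) {F : ℝ → E}
    (hF : IntegrableOn (fun s => F (s * exp (-s))) (Ioi 0)) :
    ∫ q in Ioi 1, (deriv s₂ q - deriv s₁ q) • F (exp (-q)) =
      ∫ s in Ioi 0, F (s * exp (-s)) := by
  have hF₁ : IntegrableOn (fun s => F (s * exp (-s))) (Ioo 0 1) := hF.mono_set Ioo_subset_Ioi_self
  have hF₂ : IntegrableOn (fun s => F (s * exp (-s))) (Ioi 1) :=
    hF.mono_set (Ioi_subset_Ioi zero_le_one)
  calc ∫ q in Ioi 1, (deriv s₂ q - deriv s₁ q) • F (exp (-q))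
      = ∫ q in Ioi 1, (|deriv s₁ q| • F (exp (-q)) + |deriv s₂ q| • F (exp (-q))) :=
        setIntegral_congr_fun measurableSet_Ioi fun q hq => by
          rw [abs_of_neg (h₁.deriv_neg hq), abs_of_pos (h₂.deriv_pos hq), ← add_smul,
            sub_eq_neg_add]
    _ = (∫ q in Ioi 1, |deriv s₁ q| • F (exp (-q))) +
          ∫ q in Ioi 1, |deriv s₂ q| • F (exp (-q)) :=
        integral_add ((h₁.integrableOn_abs_deriv_smul_iff F).2 hF₁)
          ((h₂.integrableOn_abs_deriv_smul_iff F).2 hF₂)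
    _ = (∫ s in Ioo 0 1, F (s * exp (-s))) + ∫ s in Ioi 1, F (s * exp (-s)) := by
        rw [h₁.integral_abs_deriv_smul, h₂.integral_abs_deriv_smul]
    _ = ∫ s in Ioi 0, F (s * exp (-s)) := by
        rw [← integral_Ioc_eq_integral_Ioo, ← setIntegral_union Ioc_disjoint_Ioi_same
          measurableSet_Ioi (hF.mono_set Ioc_subset_Ioi_self) hF₂,
          Ioc_union_Ioi_eq_Ioi zero_le_one]

end IsStirlingBranch

section StirlingSeries

variable {x y : ℝ}

theorem ae_norm_mul_mul_exp_neg_le (y : ℝ) :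
    ∀ᵐ s ∂volume.restrict (Ioi 0), ‖y * (s * exp (-s))‖ ≤ |y| / exp 1 := by
  filter_upwards [ae_restrict_mem measurableSet_Ioi] with s (hs : 0 < s)
  rw [norm_mul, norm_eq_abs, norm_of_nonneg (by positivity), div_eq_mul_inv, ← exp_neg]
  gcongr
  exact mul_exp_neg_le_exp_neg_one s

theorem integrableOn_mul_exp_neg_mul_inv_one_sub (hy : |y| < exp 1) :
    IntegrableOn (fun s => s * exp (-s) * (1 - y * (s * exp (-s)))⁻¹) (Ioi 0) :=
  integrable_mul_inv_one_sub integrableOn_mul_exp_neg_Ioi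
    (integrableOn_mul_exp_neg_Ioi.aestronglyMeasurable.const_mul y)
    (ae_norm_mul_mul_exp_neg_le y) ((div_lt_one (exp_pos 1)).2 hy)

theorem hasSum_factorial_div_pow_mul_pow (hy : |y| < exp 1) :
    HasSum (fun n : ℕ => (n + 1)! / (n + 1 : ℝ) ^ (n + 2) * y ^ n)
      (∫ s in Ioi 0, s * exp (-s) * (1 - y * (s * exp (-s)))⁻¹) := by
  refine (hasSum_integral_mul_pow integrableOn_mul_exp_neg_Ioi
    (integrableOn_mul_exp_neg_Ioi.aestronglyMeasurable.const_mul y)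
    (ae_norm_mul_mul_exp_neg_le y) ((div_lt_one (exp_pos 1)).2 hy)).congr_fun fun n => ?_
  have hterm (s : ℝ) :
      s * exp (-s) * (y * (s * exp (-s))) ^ n = (s * exp (-s)) ^ (n + 1) * y ^ n := by ring
  simp_rw [hterm]
  rw [integral_mul_const, integral_mul_exp_neg_pow_Ioi n.succ_ne_zero, Nat.cast_add_one]

theorem abs_inv_lt_exp_one (hx : 1 / exp 1 < x) : |x⁻¹| < exp 1 := by
  have hx₀ : 0 < x := (by positivity : 0 < 1 / exp 1).trans hx
  rwa [abs_of_pos (inv_pos.2 hx₀), inv_lt_comm₀ hx₀ (exp_pos 1), ← one_div]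

theorem integral_exp_neg_mul_tsum_pow_div (hx : 1 / exp 1 < x) :
    ∫ z in Ioi (0 : ℝ), exp (-x * z) * ∑' n : ℕ, z ^ (n + 1) / (n + 1 : ℝ) ^ (n + 2) =
      x⁻¹ ^ 2 * ∫ s in Ioi 0, s * exp (-s) * (1 - x⁻¹ * (s * exp (-s)))⁻¹ := by
  have hx₀ : 0 < x := (by positivity : 0 < 1 / exp 1).trans hx
  have hseries := (hasSum_factorial_div_pow_mul_pow (abs_inv_lt_exp_one hx)).mul_left (x⁻¹ ^ 2)
  have hterm (n : ℕ) : x⁻¹ ^ 2 * ((n + 1)! / (n + 1 : ℝ) ^ (n + 2) * x⁻¹ ^ n) =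
      (n + 1)! / x ^ (n + 1 + 1) * ((n + 1 : ℝ) ^ (n + 2))⁻¹ := by
    rw [inv_pow, inv_pow]
    field_simp
    ring
  simp_rw [hterm] at hseries
  have hlaplace := hasSum_laplace_tsum_pow_smul (fun n : ℕ => n + 1)
    (fun n : ℕ => ((n + 1 : ℝ) ^ (n + 2))⁻¹) hx₀
    (hseries.summable.congr fun n => by rw [norm_of_nonneg (by positivity)])
  simpa only [smul_eq_mul, div_eq_mul_inv] using hlaplace.unique hseries

end StirlingSeries

theorem exp_neg_mul_inv_one_sub_mul_exp_neg (y q : ℝ) :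
    exp (-q) * (1 - y * exp (-q))⁻¹ = (exp q - y)⁻¹ := by
  have hexp : exp q - y = (exp (-q))⁻¹ * (1 - y * exp (-q)) := by
    rw [exp_neg, inv_inv, mul_sub, mul_one, mul_left_comm, mul_inv_cancel₀ (exp_ne_zero q), mul_one]
  rw [hexp, mul_inv, inv_inv]

/-- With `f₃(z) = Σ_{n≥1} z^n/n^{n+1}` and `G(p) = s₂'(1+p) - s₁'(1+p)` (inverse branches of
`s - ln s`), for real `x > 1/e`:
`∫_0^∞ e^{-xz} f₃(z) dz = x^{-2} ∫_0^∞ G(ln(1+t)) / ((te + e - x^{-1})(t+1)) dt`. -/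
theorem stmt11 (s₁ s₂ : ℝ → ℝ)
    (h₁ : ∀ t : ℝ, 1 < t → s₁ t ∈ Ioo (0 : ℝ) 1 ∧ s₁ t - Real.log (s₁ t) = t)
    (h₂ : ∀ t : ℝ, 1 < t → s₂ t ∈ Ioi (1 : ℝ) ∧ s₂ t - Real.log (s₂ t) = t)
    (x : ℝ) (hx : 1 / Real.exp 1 < x) :
    (∫ z in Ioi (0 : ℝ),
        Real.exp (-x * z) * ∑' n : ℕ, z ^ (n + 1) / ((n + 1 : ℝ) ^ (n + 2))) =
      x⁻¹ ^ 2 *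
        ∫ t in Ioi (0 : ℝ),
          (deriv s₂ (1 + Real.log (1 + t)) - deriv s₁ (1 + Real.log (1 + t))) /
            ((t * Real.exp 1 + Real.exp 1 - x⁻¹) * (t + 1)) := by
  rw [integral_exp_neg_mul_tsum_pow_div hx,
    ← (IsStirlingBranch.of_Ioo h₁).integral_deriv_sub_deriv_smul (.of_Ioi h₂)
      (F := fun u => u * (1 - x⁻¹ * u)⁻¹)
      (integrableOn_mul_exp_neg_mul_inv_one_sub (abs_inv_lt_exp_one hx)),
    integral_Ioi_eq_integral_comp_add_log]
  congr 1
  refine setIntegral_congr_fun measurableSet_Ioi fun t (ht : 0 < t) => ?_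
  have hexp : exp (1 + log (1 + t)) = t * exp 1 + exp 1 := by
    rw [exp_add, exp_log (by positivity)]
    ring
  simp only [exp_neg_mul_inv_one_sub_mul_exp_neg, hexp, smul_eq_mul, div_eq_mul_inv, mul_inv]
  ring
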